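/- arXiv:2112.14291 — 3 statements merged into one kernel-verified Lean document; each statement's English description precedes it below -/
import Mathlib

section
/- Let F₁ be an n×k₁ real matrix and F₂ an n×k₂ real matrix with C = F₁·F₁ᵀ = F₂·F₂ᵀ, and let s ≤ min(k₁, k₂). Then the set of objective values attained by DFact-feasible tuples for (C, s, A, b; F₁) equals the set of objective values attained by DFact-feasible tuples for (C, s, A, b; F₂); in particular, the factorization bound (the infimum of the objective over DFact-feasible tuples) is independent of the particular factorization of C. -/
open Matrix

/-- The eigenvalues of a real symmetric matrix, sorted in nonincreasing order:
`sortedEigs M 0` is the largest eigenvalue (`λ_1`) and `sortedEigs M (k-1)` the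
smallest (`λ_k`).  For non-Hermitian matrices we return the junk value `0`. -/
noncomputable def sortedEigs {k : ℕ} (M : Matrix (Fin k) (Fin k) ℝ) : Fin k → ℝ :=
  if h : M.IsHermitian then fun i => (h.eigenvalues ∘ Tuple.sort h.eigenvalues) i.rev
  else fun _ => 0

/-- DFact-feasibility of the tuple `(Θ, υ, ν, π, τ)` for the data `(A; F)`:
`Θ ≻ 0`, `υ, ν, π ≥ 0` and `diag(FΘFᵀ) + υ − ν − Aᵀπ − τ𝟙 = 0`. -/
def DFactFeasible {n m k : ℕ} (A : Matrix (Fin m) (Fin n) ℝ) (F : Matrix (Fin n) (Fin k) ℝ)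
    (Θ : Matrix (Fin k) (Fin k) ℝ) (υ ν : Fin n → ℝ) (π : Fin m → ℝ) (τ : ℝ) : Prop :=
  Θ.PosDef ∧ (∀ j, 0 ≤ υ j) ∧ (∀ j, 0 ≤ ν j) ∧ (∀ i, 0 ≤ π i) ∧
    ∀ j, (F * Θ * Fᵀ) j j + υ j - ν j - (∑ i, A i j * π i) - τ = 0

/-- The DFact objective value
`f(Θ, ν, π, τ) = −Σ_{ℓ=k−s+1}^{k} log λ_ℓ(Θ) + νᵀ𝟙 + πᵀb + τ·s − s`. -/
noncomputable def DFactObj {n m k : ℕ} (s : ℕ) (b : Fin m → ℝ)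
    (Θ : Matrix (Fin k) (Fin k) ℝ) (ν : Fin n → ℝ) (π : Fin m → ℝ) (τ : ℝ) : ℝ :=
  -(∑ i : Fin k, if k - s ≤ (i : ℕ) then Real.log (sortedEigs Θ i) else 0)
    + (∑ j, ν j) + (∑ i, π i * b i) + τ * s - s

/-- The eigenvalues of a real symmetric matrix in nondecreasing order. -/
noncomputable def ascendingEigs {k : ℕ} (M : Matrix (Fin k) (Fin k) ℝ) : Fin k → ℝ :=
  fun i => sortedEigs M i.rev

/-- A real symmetric matrix is orthogonally diagonalized with its eigenvalues in
nondecreasing order. -/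
lemma exists_orthogonal_diagonalization {k : ℕ} {M : Matrix (Fin k) (Fin k) ℝ}
    (h : M.IsHermitian) :
    Monotone (ascendingEigs M) ∧
      ∃ U : Matrix (Fin k) (Fin k) ℝ, Uᵀ * U = 1 ∧ U * Uᵀ = 1 ∧
        Uᵀ * M * U = diagonal (ascendingEigs M) := by
  have he : ascendingEigs M = h.eigenvalues ∘ Tuple.sort h.eigenvalues := by
    funext i
    simp only [ascendingEigs, sortedEigs, dif_pos h, Fin.rev_rev]
  refine ⟨he ▸ Tuple.monotone_sort _, ?_⟩
  set U₀ : Matrix (Fin k) (Fin k) ℝ := ↑h.eigenvectorUnitary with hU₀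
  set σ := Tuple.sort h.eigenvalues
  have hU1 : U₀ᵀ * U₀ = 1 := by
    have := Unitary.coe_star_mul_self h.eigenvectorUnitary
    rwa [star_eq_conjTranspose, conjTranspose_eq_transpose_of_trivial] at this
  have hU2 : U₀ * U₀ᵀ = 1 := mul_eq_one_comm.mp hU1
  have hM : U₀ᵀ * M * U₀ = diagonal h.eigenvalues := by
    have hs := h.spectral_theorem
    rw [Unitary.conjStarAlgAut_apply, star_eq_conjTranspose,
      conjTranspose_eq_transpose_of_trivial, ← hU₀] at hs
    have hd : diagonal (RCLike.ofReal ∘ h.eigenvalues) = diagonal h.eigenvalues := rfl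
    rw [hd] at hs
    calc U₀ᵀ * M * U₀ = U₀ᵀ * (U₀ * diagonal h.eigenvalues * U₀ᵀ) * U₀ := by rw [← hs]
      _ = (U₀ᵀ * U₀) * diagonal h.eigenvalues * (U₀ᵀ * U₀) := by simp only [Matrix.mul_assoc]
      _ = _ := by simp [hU1]
  have hV : (U₀.submatrix id σ)ᵀ * U₀.submatrix id σ = 1 := by
    rw [transpose_submatrix, ← submatrix_mul _ _ _ _ _ Function.bijective_id, hU1,
      submatrix_one_equiv]
  refine ⟨U₀.submatrix id σ, hV, mul_eq_one_comm.mp hV, ?_⟩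
  have : (U₀.submatrix id σ)ᵀ * M * U₀.submatrix id σ = (U₀ᵀ * M * U₀).submatrix σ σ := by
    rw [transpose_submatrix, submatrix_mul _ _ _ id _ Function.bijective_id,
      submatrix_mul _ _ _ id _ Function.bijective_id, submatrix_id_id]
  rw [this, hM, submatrix_diagonal_equiv, he]

lemma dotProduct_diagonal_mulVec {k : ℕ} (a x : Fin k → ℝ) :
    x ⬝ᵥ (diagonal a *ᵥ x) = ∑ i, a i * x i ^ 2 := by
  simp only [dotProduct, mulVec_diagonal]
  exact Finset.sum_congr rfl fun i _ => by ring

/-- Comparison of the diagonal entries of two ordered diagonal matrices related by a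
contraction. -/
lemma le_of_diagonal_eq_contraction {k l : ℕ} {a : Fin k → ℝ} {b : Fin l → ℝ}
    (ha : Monotone a) (hb : Monotone b) {c : ℝ} (hc : ∀ i, a i ≤ c)
    {T : Matrix (Fin k) (Fin l) ℝ} (hT : (1 - Tᵀ * T).PosSemidef)
    (h : diagonal b = Tᵀ * diagonal a * T + c • (1 - Tᵀ * T))
    {j : ℕ} (hjk : j < k) (hjl : j < l) : a ⟨j, hjk⟩ ≤ b ⟨j, hjl⟩ := by
  let E : Matrix (Fin l) (Fin (j + 1)) ℝ := (1 : Matrix (Fin l) (Fin l) ℝ).submatrix id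
    (Fin.castLE hjl)
  let R : Matrix (Fin j) (Fin (j + 1)) ℝ := (T * E).submatrix (Fin.castLE hjk.le) id
  obtain ⟨x, hx, hx0⟩ := (Submodule.ne_bot_iff _).mp
    (LinearMap.ker_ne_bot_of_finrank_lt (f := R.mulVecLin) (by simp))
  have hRx : R *ᵥ x = 0 := hx
  set y := E *ᵥ x with hy
  have hyval : ∀ i : Fin (j + 1), y (Fin.castLE hjl i) = x i := by
    intro i
    simp [hy, E, mulVec, dotProduct, Matrix.one_apply]
  have hyzero : ∀ i : Fin l, j < i → y i = 0 := by
    intro i hi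
    simp only [hy, E, mulVec, dotProduct]
    refine Finset.sum_eq_zero fun p _ => ?_
    have : i ≠ Fin.castLE hjl p := by
      rintro rfl
      simp only [Fin.val_castLE] at hi
      omega
    simp [this]
  have hTy : ∀ i : Fin k, (i : ℕ) < j → (T *ᵥ y) i = 0 := by
    intro i hi
    rw [hy, mulVec_mulVec]
    exact congrFun hRx ⟨i, hi⟩
  have hypos : 0 < y ⬝ᵥ y := by
    refine lt_of_le_of_ne (Finset.sum_nonneg fun i _ => mul_self_nonneg _) (Ne.symm ?_)
    rw [Ne, dotProduct_self_eq_zero]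
    intro h0
    exact hx0 (funext fun i => by rw [← hyval i, h0]; rfl)
  have hP : 0 ≤ y ⬝ᵥ y - (T *ᵥ y) ⬝ᵥ (T *ᵥ y) := by
    have := hT.dotProduct_mulVec_nonneg y
    simpa [sub_mulVec, dotProduct_sub, ← mulVec_mulVec, dotProduct_mulVec y Tᵀ,
      vecMul_transpose] using this
  have hquad : ∑ i, b i * y i ^ 2 = ∑ i, a i * (T *ᵥ y) i ^ 2
      + c * (y ⬝ᵥ y - (T *ᵥ y) ⬝ᵥ (T *ᵥ y)) := by
    rw [← dotProduct_diagonal_mulVec, ← dotProduct_diagonal_mulVec, h]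
    simp [add_mulVec, smul_mulVec, sub_mulVec, dotProduct_sub, ← mulVec_mulVec,
      dotProduct_mulVec y Tᵀ, vecMul_transpose]
  have hble : ∑ i, b i * y i ^ 2 ≤ b ⟨j, hjl⟩ * (y ⬝ᵥ y) := by
    rw [dotProduct, Finset.mul_sum]
    refine Finset.sum_le_sum fun i _ => ?_
    rcases lt_or_ge j (i : ℕ) with hi | hi
    · simp [hyzero i hi]
    · rw [← sq]
      exact mul_le_mul_of_nonneg_right (hb hi) (sq_nonneg _)
  have hage : a ⟨j, hjk⟩ * ((T *ᵥ y) ⬝ᵥ (T *ᵥ y)) ≤ ∑ i, a i * (T *ᵥ y) i ^ 2 := by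
    rw [dotProduct, Finset.mul_sum]
    refine Finset.sum_le_sum fun i _ => ?_
    rcases lt_or_ge (i : ℕ) j with hi | hi
    · simp [hTy i hi]
    · rw [← sq]
      exact mul_le_mul_of_nonneg_right (ha hi) (sq_nonneg _)
  have hcP := mul_le_mul_of_nonneg_right (hc ⟨j, hjk⟩) hP
  refine le_of_mul_le_mul_right ?_ hypos
  linarith

lemma ascendingEigs_eq_of_diagonalization {k : ℕ} {M : Matrix (Fin k) (Fin k) ℝ}
    (hM : M.IsHermitian) {V : Matrix (Fin k) (Fin k) ℝ} {b : Fin k → ℝ} (hb : Monotone b)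
    (hV : Vᵀ * V = 1) (hd : Vᵀ * M * V = diagonal b) : ascendingEigs M = b := by
  obtain ⟨ha, U, hU, hU', hUd⟩ := exists_orthogonal_diagonalization hM
  have hV' : V * Vᵀ = 1 := mul_eq_one_comm.mp hV
  have key : ∀ {a b : Fin k → ℝ} {U V : Matrix (Fin k) (Fin k) ℝ}, Monotone a → Monotone b →
      U * Uᵀ = 1 → Vᵀ * V = 1 → Uᵀ * M * U = diagonal a → Vᵀ * M * V = diagonal b →
      a ≤ b := by
    intro a b U V ha hb hU hV hUd hVd i
    obtain ⟨c, hc⟩ := (Set.finite_range a).bddAbove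
    have hT : (Uᵀ * V)ᵀ * (Uᵀ * V) = 1 := by
      rw [transpose_mul, transpose_transpose, Matrix.mul_assoc, ← Matrix.mul_assoc U, hU,
        Matrix.one_mul, hV]
    refine le_of_diagonal_eq_contraction (T := Uᵀ * V) (c := c) ha hb
      (fun i => hc ⟨i, rfl⟩) (by rw [hT, sub_self]; exact PosSemidef.zero) ?_ i.2 i.2
    rw [hT, sub_self, smul_zero, add_zero, ← hUd, ← hVd]
    calc Vᵀ * M * V = Vᵀ * (U * Uᵀ) * M * (U * Uᵀ) * V := by simp [hU]
      _ = _ := by simp only [transpose_mul, transpose_transpose, Matrix.mul_assoc]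
  exact le_antisymm (key ha hb hU' hV hUd hd) (key hb ha hV' hU hd hUd)

lemma ascendingEigs_smul {k : ℕ} {M : Matrix (Fin k) (Fin k) ℝ} (hM : M.IsHermitian)
    {t : ℝ} (ht : 0 ≤ t) : ascendingEigs (t • M) = t • ascendingEigs M := by
  obtain ⟨ha, U, hU, -, hUd⟩ := exists_orthogonal_diagonalization hM
  refine ascendingEigs_eq_of_diagonalization (hM.smul (IsSelfAdjoint.all t))
    (fun i j hij => mul_le_mul_of_nonneg_left (ha hij) ht) hU ?_
  rw [Matrix.mul_smul, Matrix.smul_mul, hUd, diagonal_smul]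

lemma ascendingEigs_pos {k : ℕ} {M : Matrix (Fin k) (Fin k) ℝ} (hM : M.PosDef) (i : Fin k) :
    0 < ascendingEigs M i := by
  simp only [ascendingEigs, sortedEigs, hM.isHermitian, dite_true, Function.comp]
  exact hM.eigenvalues_pos _

/-- Eigenvalue comparison for `Wᵀ M W + c (1 - Wᵀ W)` with `W` a contraction. -/
lemma ascendingEigs_le_contraction {k l : ℕ} {M : Matrix (Fin k) (Fin k) ℝ}
    (hM : M.IsHermitian) {N : Matrix (Fin l) (Fin l) ℝ} (hN : N.IsHermitian) {c : ℝ}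
    (hc : ∀ i, ascendingEigs M i ≤ c) {W : Matrix (Fin k) (Fin l) ℝ}
    (hW : (1 - Wᵀ * W).PosSemidef) (h : N = Wᵀ * M * W + c • (1 - Wᵀ * W))
    {j : ℕ} (hjk : j < k) (hjl : j < l) :
    ascendingEigs M ⟨j, hjk⟩ ≤ ascendingEigs N ⟨j, hjl⟩ := by
  obtain ⟨ha, U, -, hU, hUd⟩ := exists_orthogonal_diagonalization hM
  obtain ⟨hb, V, hV, -, hVd⟩ := exists_orthogonal_diagonalization hN
  have hT : (Uᵀ * W * V)ᵀ * (Uᵀ * W * V) = Vᵀ * (Wᵀ * W) * V := by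
    calc _ = Vᵀ * Wᵀ * (U * Uᵀ) * W * V := by
          simp only [transpose_mul, transpose_transpose, Matrix.mul_assoc]
      _ = _ := by rw [hU, Matrix.mul_one]; simp only [Matrix.mul_assoc]
  have hT' : 1 - (Uᵀ * W * V)ᵀ * (Uᵀ * W * V) = Vᵀ * (1 - Wᵀ * W) * V := by
    rw [hT, Matrix.mul_sub, Matrix.sub_mul, Matrix.mul_one, hV]
  refine le_of_diagonal_eq_contraction (T := Uᵀ * W * V) ha hb hc ?_ ?_ hjk hjl
  · rw [hT']
    simpa using hW.conjTranspose_mul_mul_same V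
  · rw [hT', ← hUd, ← hVd, h, Matrix.mul_add, Matrix.add_mul, Matrix.mul_smul, Matrix.smul_mul]
    congr 1
    calc Vᵀ * (Wᵀ * M * W) * V = Vᵀ * (Wᵀ * (U * Uᵀ) * M * (U * Uᵀ) * W) * V := by simp [hU]
      _ = _ := by simp only [transpose_mul, transpose_transpose, Matrix.mul_assoc]

lemma exists_symm_pseudoinverse {n : ℕ} {C : Matrix (Fin n) (Fin n) ℝ} (hC : C.IsHermitian) :
    ∃ D : Matrix (Fin n) (Fin n) ℝ, Dᵀ = D ∧ C * D * C = C ∧ D * C * D = D := by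
  obtain ⟨-, U, hU, hU', hd⟩ := exists_orthogonal_diagonalization hC
  set e := ascendingEigs C
  have hCU : C = U * diagonal e * Uᵀ := by
    rw [← hd]
    calc C = (U * Uᵀ) * C * (U * Uᵀ) := by simp [hU']
      _ = _ := by simp only [Matrix.mul_assoc]
  have hmul : ∀ x y z : Fin n → ℝ, (U * diagonal x * Uᵀ) * (U * diagonal y * Uᵀ) *
      (U * diagonal z * Uᵀ) = U * diagonal (fun i => x i * y i * z i) * Uᵀ := by
    intro x y z
    calc _ = U * (diagonal x * (Uᵀ * U) * diagonal y * (Uᵀ * U) * diagonal z) * Uᵀ := by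
          simp only [Matrix.mul_assoc]
      _ = _ := by simp [hU, diagonal_mul_diagonal]
  refine ⟨U * diagonal (fun i => (e i)⁻¹) * Uᵀ, ?_, ?_, ?_⟩
  · simp [transpose_mul, Matrix.mul_assoc]
  · rw [hCU, hmul]
    simp
  · rw [hCU, hmul]
    congr 3
    funext i
    by_cases h : e i = 0
    · simp [h]
    · field_simp

/-- Two factorizations of the same matrix are related by a partial isometry. -/
lemma exists_contraction_of_mul_transpose_eq {n k l : ℕ} {F : Matrix (Fin n) (Fin k) ℝ}
    {G : Matrix (Fin n) (Fin l) ℝ} (h : F * Fᵀ = G * Gᵀ) :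
    ∃ W : Matrix (Fin k) (Fin l) ℝ, F * W = G ∧ G * Wᵀ = F ∧ (1 - Wᵀ * W).PosSemidef := by
  have hC : (F * Fᵀ).IsHermitian := by simpa using isHermitian_mul_conjTranspose_self F
  obtain ⟨D, hD, h1, h2⟩ := exists_symm_pseudoinverse hC
  have absorb : ∀ {p : ℕ} (H : Matrix (Fin n) (Fin p) ℝ), F * Fᵀ = H * Hᵀ →
      F * Fᵀ * D * H = H := by
    intro p H hH
    have h3 : (F * Fᵀ * D * H - H) * (H)ᵀ = 0 := by
      rw [Matrix.sub_mul, Matrix.mul_assoc _ H, ← hH, h1, sub_self]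
    have h4 : (F * Fᵀ * D * H - H) * (F * Fᵀ * D * H - H)ᵀ = 0 := by
      have : (F * Fᵀ * D * H - H)ᵀ = Hᵀ * (F * Fᵀ * D - 1)ᵀ := by
        rw [← transpose_mul, Matrix.sub_mul, Matrix.one_mul]
      rw [this, ← Matrix.mul_assoc, h3, Matrix.zero_mul]
    rw [← conjTranspose_eq_transpose_of_trivial (_ - H), self_mul_conjTranspose_eq_zero] at h4
    exact sub_eq_zero.mp h4
  have hW : (Fᵀ * D * G)ᵀ * (Fᵀ * D * G) = Gᵀ * D * G := by
    calc _ = Gᵀ * (D * (F * Fᵀ) * D) * G := by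
          simp only [transpose_mul, transpose_transpose, Matrix.mul_assoc, hD]
      _ = _ := by rw [h2]
  refine ⟨Fᵀ * D * G, ?_, ?_, ?_⟩
  · simpa only [Matrix.mul_assoc] using absorb G h
  · have := absorb F rfl
    rw [h] at this
    simpa only [transpose_mul, transpose_transpose, Matrix.mul_assoc, hD] using this
  · rw [hW]
    have hP : (1 - Gᵀ * D * G)ᵀ * (1 - Gᵀ * D * G) = 1 - Gᵀ * D * G := by
      have ht : (Gᵀ * D * G)ᵀ = Gᵀ * D * G := by
        simp only [transpose_mul, transpose_transpose, Matrix.mul_assoc, hD]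
      have hi : Gᵀ * D * G * (Gᵀ * D * G) = Gᵀ * D * G := by
        calc _ = Gᵀ * (D * (G * Gᵀ) * D) * G := by simp only [Matrix.mul_assoc]
          _ = _ := by rw [← h, h2]
      rw [transpose_sub, transpose_one, ht, Matrix.sub_mul, Matrix.one_mul, Matrix.mul_sub, hi]
      simp
    rw [← hP, ← conjTranspose_eq_transpose_of_trivial (1 - _)]
    exact posSemidef_conjTranspose_mul_self (1 - Gᵀ * D * G)

lemma DFactObj_eq {n m s k : ℕ} (hsk : s ≤ k) (b : Fin m → ℝ) (Θ : Matrix (Fin k) (Fin k) ℝ)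
    (ν : Fin n → ℝ) (π : Fin m → ℝ) (τ : ℝ) :
    DFactObj s b Θ ν π τ = -(∑ j : Fin s, Real.log (ascendingEigs Θ (Fin.castLE hsk j)))
      + (∑ j, ν j) + (∑ i, π i * b i) + τ * s - s := by
  have h : (∑ i : Fin k, if k - s ≤ (i : ℕ) then Real.log (sortedEigs Θ i) else 0)
      = ∑ j : Fin s, Real.log (ascendingEigs Θ (Fin.castLE hsk j)) := by
    rw [← Finset.sum_filter]
    symm
    refine Finset.sum_bij (fun j _ => (Fin.castLE hsk j).rev) ?_ ?_ ?_ ?_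
    · intro j _
      simp only [Finset.mem_filter, Finset.mem_univ, true_and, Fin.val_rev, Fin.val_castLE]
      omega
    · intro i _ j _ hij
      simpa using hij
    · intro i hi
      simp only [Finset.mem_filter, Finset.mem_univ, true_and] at hi
      refine ⟨⟨k - 1 - i, by omega⟩, Finset.mem_univ _, ?_⟩
      ext
      simp only [Fin.val_rev, Fin.val_castLE]
      omega
    · intro j _
      rfl
  rw [DFactObj, h]

/-- Every objective value attained for the factor `F` is attained for the factor `G`. -/
lemma exists_DFactFeasible_of_mul_transpose_eq {n m s k l : ℕ} (hs : 0 < s) (hsk : s ≤ k)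
    (hsl : s ≤ l) {F : Matrix (Fin n) (Fin k) ℝ} {G : Matrix (Fin n) (Fin l) ℝ}
    (hFG : F * Fᵀ = G * Gᵀ) {A : Matrix (Fin m) (Fin n) ℝ} (b : Fin m → ℝ)
    {Θ : Matrix (Fin k) (Fin k) ℝ} {υ ν : Fin n → ℝ} {π : Fin m → ℝ} {τ : ℝ}
    (h : DFactFeasible A F Θ υ ν π τ) :
    ∃ (Θ' : Matrix (Fin l) (Fin l) ℝ) (υ' ν' : Fin n → ℝ) (π' : Fin m → ℝ) (τ' : ℝ),
      DFactFeasible A G Θ' υ' ν' π' τ' ∧ DFactObj s b Θ ν π τ = DFactObj s b Θ' ν' π' τ' := by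
  obtain ⟨hΘ, hυ, hν, hπ, heq⟩ := h
  obtain ⟨W, hFW, hGW, hP⟩ := exists_contraction_of_mul_transpose_eq hFG
  obtain ⟨c₀, hc₀⟩ := (Set.finite_range (ascendingEigs Θ)).bddAbove
  obtain ⟨c, hc, hcpos⟩ : ∃ c, (∀ i, ascendingEigs Θ i ≤ c) ∧ 0 < c :=
    ⟨max c₀ 1, fun i => (hc₀ ⟨i, rfl⟩).trans (le_max_left _ _), by positivity⟩
  set N := Wᵀ * Θ * W + c • (1 - Wᵀ * W) with hNdef
  have hGN : G * N * Gᵀ = F * Θ * Fᵀ := by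
    have h0 : G * (1 - Wᵀ * W) = 0 := by
      rw [Matrix.mul_sub, Matrix.mul_one, ← Matrix.mul_assoc, hGW, hFW, sub_self]
    have hWG : W * Gᵀ = Fᵀ := by rw [← hGW, transpose_mul, transpose_transpose]
    rw [hNdef, Matrix.mul_add, Matrix.mul_smul, h0, smul_zero, add_zero, ← Matrix.mul_assoc,
      ← Matrix.mul_assoc, hGW, Matrix.mul_assoc, hWG]
  have hWΘ : (Wᵀ * Θ * W).PosSemidef := by
    simpa using hΘ.posSemidef.conjTranspose_mul_mul_same W
  have hN0 : N.PosSemidef := hWΘ.add (hP.smul hcpos.le)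
  have hN : N.PosDef := by
    refine PosDef.of_dotProduct_mulVec_pos hN0.isHermitian fun x hx => ?_
    have h1 := hP.dotProduct_mulVec_nonneg x
    have hsplit : star x ⬝ᵥ (N *ᵥ x) = (W *ᵥ x) ⬝ᵥ (Θ *ᵥ (W *ᵥ x))
        + c * (star x ⬝ᵥ ((1 - Wᵀ * W) *ᵥ x)) := by
      simp [hNdef, add_mulVec, smul_mulVec, ← mulVec_mulVec, dotProduct_mulVec x Wᵀ,
        vecMul_transpose]
    rw [hsplit]
    by_cases hWx : W *ᵥ x = 0
    · have : star x ⬝ᵥ ((1 - Wᵀ * W) *ᵥ x) = x ⬝ᵥ x := by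
        simp [sub_mulVec, ← mulVec_mulVec, hWx]
      have hpos : 0 < x ⬝ᵥ x := by
        simpa using dotProduct_star_self_pos_iff.mpr hx
      rw [this, hWx]
      simpa using mul_pos hcpos hpos
    · have := hΘ.dotProduct_mulVec_pos hWx
      simp only [star_trivial] at this
      have := mul_nonneg hcpos.le h1
      linarith
  have hle : DFactObj s b N ν π τ ≤ DFactObj s b Θ ν π τ := by
    rw [DFactObj_eq hsk, DFactObj_eq hsl]
    have : ∑ j : Fin s, Real.log (ascendingEigs Θ (Fin.castLE hsk j))
        ≤ ∑ j : Fin s, Real.log (ascendingEigs N (Fin.castLE hsl j)) :=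
      Finset.sum_le_sum fun j _ => Real.log_le_log (ascendingEigs_pos hΘ _)
        (ascendingEigs_le_contraction hΘ.isHermitian hN.isHermitian hc hP hNdef _ _)
    linarith
  have hs' : (0 : ℝ) < s := Nat.cast_pos.mpr hs
  set r := (DFactObj s b N ν π τ - DFactObj s b Θ ν π τ) / s with hr
  have hr0 : r ≤ 0 := div_nonpos_of_nonpos_of_nonneg (by linarith) hs'.le
  have hexp : Real.exp r ≤ 1 := Real.exp_le_one_iff.mpr hr0
  refine ⟨Real.exp r • N, fun j => υ j + (1 - Real.exp r) * (F * Θ * Fᵀ) j j, ν, π, τ,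
    ⟨hN.smul (Real.exp_pos r), fun j => ?_, hν, hπ, fun j => ?_⟩, ?_⟩
  · have hFF : (F * Θ * Fᵀ).PosSemidef := by
      simpa using hΘ.posSemidef.mul_mul_conjTranspose_same F
    exact add_nonneg (hυ j) (mul_nonneg (by linarith) hFF.diag_nonneg)
  · rw [Matrix.mul_smul, Matrix.smul_mul, hGN, Matrix.smul_apply, smul_eq_mul]
    linarith [heq j]
  · have hsum : ∑ j : Fin s, Real.log (ascendingEigs (Real.exp r • N) (Fin.castLE hsl j))
        = s * r + ∑ j : Fin s, Real.log (ascendingEigs N (Fin.castLE hsl j)) := by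
      rw [ascendingEigs_smul hN.isHermitian (Real.exp_pos r).le]
      simp only [Pi.smul_apply, smul_eq_mul,
        Real.log_mul (Real.exp_pos r).ne' (ascendingEigs_pos hN _).ne', Real.log_exp,
        Finset.sum_add_distrib, Finset.sum_const, Finset.card_univ, Fintype.card_fin,
        nsmul_eq_mul]
    have hsr : s * r = DFactObj s b N ν π τ - DFactObj s b Θ ν π τ :=
      mul_div_cancel₀ _ hs'.ne'
    have hobj := DFactObj_eq hsl b N ν π τ
    rw [DFactObj_eq hsl b (Real.exp r • N), hsum, hsr]
    linarith

theorem stmt_2 {n m s k₁ k₂ : ℕ} (hn : 0 < n) (hm : 0 < m) (hs : 0 < s)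
    (hsk₁ : s ≤ k₁) (hsk₂ : s ≤ k₂)
    (C : Matrix (Fin n) (Fin n) ℝ) (hC : C.PosSemidef)
    (F₁ : Matrix (Fin n) (Fin k₁) ℝ) (F₂ : Matrix (Fin n) (Fin k₂) ℝ)
    (hC₁ : C = F₁ * F₁ᵀ) (hC₂ : C = F₂ * F₂ᵀ)
    (A : Matrix (Fin m) (Fin n) ℝ) (b : Fin m → ℝ) :
    -- the sets of attained objective values coincide
    {z : ℝ | ∃ (Θ : Matrix (Fin k₁) (Fin k₁) ℝ) (υ ν : Fin n → ℝ) (π : Fin m → ℝ) (τ : ℝ),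
        DFactFeasible A F₁ Θ υ ν π τ ∧ z = DFactObj s b Θ ν π τ} =
      {z : ℝ | ∃ (Θ : Matrix (Fin k₂) (Fin k₂) ℝ) (υ ν : Fin n → ℝ) (π : Fin m → ℝ) (τ : ℝ),
        DFactFeasible A F₂ Θ υ ν π τ ∧ z = DFactObj s b Θ ν π τ} ∧
    -- in particular, the factorization bound is independent of the factorization
    sInf {z : ℝ | ∃ (Θ : Matrix (Fin k₁) (Fin k₁) ℝ) (υ ν : Fin n → ℝ) (π : Fin m → ℝ) (τ : ℝ),
        DFactFeasible A F₁ Θ υ ν π τ ∧ z = DFactObj s b Θ ν π τ} =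
      sInf {z : ℝ | ∃ (Θ : Matrix (Fin k₂) (Fin k₂) ℝ) (υ ν : Fin n → ℝ) (π : Fin m → ℝ) (τ : ℝ),
        DFactFeasible A F₂ Θ υ ν π τ ∧ z = DFactObj s b Θ ν π τ} := by
  have hFF := hC₁.symm.trans hC₂
  refine (fun h => ⟨h, congrArg sInf h⟩) (Set.Subset.antisymm ?_ ?_)
  · rintro z ⟨Θ, υ, ν, π, τ, h, rfl⟩
    exact exists_DFactFeasible_of_mul_transpose_eq hs hsk₁ hsk₂ hFF b h
  · rintro z ⟨Θ, υ, ν, π, τ, h, rfl⟩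
    exact exists_DFactFeasible_of_mul_transpose_eq hs hsk₂ hsk₁ hFF.symm b h
end

section
/- Let C be an n×n real symmetric positive semidefinite matrix of rank r, let s ≤ r, and let F be an n×k real matrix with C = F·Fᵀ (so r ≤ k). Then for every m×n real matrix A and every b ∈ ℝᵐ, there exists a DFact-feasible tuple (Θ, υ, ν, π, τ) for (C, s, A, b; F) whose objective value f(Θ, ν, π, τ) equals the spectral bound Σ_{ℓ=1}^{s} log λ_ℓ(C). In particular, the factorization bound is at most the spectral bound. -/
open Matrix

open Polynomial in
theorem roots_charpoly_eq_sortedEigs {k : ℕ} {M : Matrix (Fin k) (Fin k) ℝ}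
    (hM : M.IsHermitian) :
    M.charpoly.roots = Finset.univ.val.map (sortedEigs M) := by
  have h : sortedEigs M = hM.eigenvalues ∘ (Fin.revPerm.trans (Tuple.sort hM.eigenvalues)) := by
    ext i
    simp only [sortedEigs, hM, dite_true]
    rfl
  rw [hM.roots_charpoly_eq_eigenvalues, h, ← Multiset.map_map hM.eigenvalues,
    Multiset.map_univ_val_equiv]
  rfl

theorem sortedEigs_antitone {k : ℕ} {M : Matrix (Fin k) (Fin k) ℝ} (hM : M.IsHermitian) :
    Antitone (sortedEigs M) := by
  intro i j hij
  simp only [sortedEigs, hM, dite_true]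
  exact Tuple.monotone_sort hM.eigenvalues (Fin.rev_le_rev.mpr hij)

theorem sortedEigs_nonneg {k : ℕ} {M : Matrix (Fin k) (Fin k) ℝ} (hM : M.PosSemidef)
    (i : Fin k) : 0 ≤ sortedEigs M i := by
  simp only [sortedEigs, hM.isHermitian, dite_true]
  exact hM.eigenvalues_nonneg _

/-- An antitone tuple exceeds `t` exactly on the initial segment whose length is the number of
entries exceeding `t`. -/
theorem Antitone.lt_apply_iff_lt_countP {k : ℕ} {f : Fin k → ℝ} (hf : Antitone f) (t : ℝ)
    (i : Fin k) : t < f i ↔ (i : ℕ) < (Finset.univ.val.map f).countP (t < ·) := by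
  rw [Multiset.countP_map, ← Finset.filter_val, Finset.card_val]
  constructor
  · intro h
    have hsub : Finset.Iic i ⊆ Finset.univ.filter (fun j => t < f j) := fun j hj => by
      simpa using h.trans_le (hf (Finset.mem_Iic.mp hj))
    have := Finset.card_le_card hsub
    rw [Fin.card_Iic] at this
    omega
  · intro h
    by_contra! hi
    have hsub : Finset.univ.filter (fun j => t < f j) ⊆ Finset.Iio i := fun j hj => by
      rw [Finset.mem_Iio]
      by_contra! hij
      exact absurd ((Finset.mem_filter.mp hj).2) (not_lt.mpr ((hf hij).trans hi))
    have := Finset.card_le_card hsub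
    rw [Fin.card_Iio] at this
    omega

theorem Antitone.apply_eq_of_countP_eq {n k : ℕ} {f : Fin n → ℝ} {g : Fin k → ℝ}
    (hf : Antitone f) (hg : Antitone g) (hf0 : ∀ i, 0 ≤ f i) (hg0 : ∀ i, 0 ≤ g i)
    (h : ∀ t : ℝ, 0 ≤ t → (Finset.univ.val.map f).countP (t < ·) =
      (Finset.univ.val.map g).countP (t < ·))
    {i : Fin n} {j : Fin k} (hij : (i : ℕ) = j) : f i = g j := by
  have key : ∀ t, 0 ≤ t → (t < f i ↔ t < g j) := fun t ht => by
    rw [hf.lt_apply_iff_lt_countP, hg.lt_apply_iff_lt_countP, h t ht, hij]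
  apply le_antisymm
  · by_contra! hlt
    exact lt_irrefl _ ((key _ (hg0 j)).mp hlt)
  · by_contra! hlt
    exact lt_irrefl _ ((key _ (hf0 i)).mpr hlt)

open Polynomial in
theorem countP_roots_charpoly_mul_comm {n k : ℕ} (A : Matrix (Fin n) (Fin k) ℝ)
    (B : Matrix (Fin k) (Fin n) ℝ) {t : ℝ} (ht : 0 ≤ t) :
    (A * B).charpoly.roots.countP (t < ·) = (B * A).charpoly.roots.countP (t < ·) := by
  have hX (l : ℕ) {p : ℝ[X]} (hp : p ≠ 0) :
      (X ^ l * p).roots.countP (t < ·) = p.roots.countP (t < ·) := by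
    rw [roots_mul (mul_ne_zero (pow_ne_zero _ X_ne_zero) hp), Multiset.countP_add, roots_X_pow]
    simp [Multiset.countP_nsmul, ← Multiset.cons_zero, ht]
  rw [← hX (Fintype.card (Fin k)) (charpoly_monic _).ne_zero, charpoly_mul_comm',
    hX _ (charpoly_monic _).ne_zero]

theorem sortedEigs_mul_transpose {n k : ℕ} (F : Matrix (Fin n) (Fin k) ℝ) {i : Fin n} {j : Fin k}
    (hij : (i : ℕ) = j) : sortedEigs (F * Fᵀ) i = sortedEigs (Fᵀ * F) j := by
  have h1 : (F * Fᵀ).PosSemidef := by simpa using posSemidef_self_mul_conjTranspose F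
  have h2 : (Fᵀ * F).PosSemidef := by simpa using posSemidef_conjTranspose_mul_self F
  refine (sortedEigs_antitone h1.isHermitian).apply_eq_of_countP_eq
    (sortedEigs_antitone h2.isHermitian) (sortedEigs_nonneg h1) (sortedEigs_nonneg h2) ?_ hij
  intro t ht
  rw [← roots_charpoly_eq_sortedEigs h1.isHermitian, ← roots_charpoly_eq_sortedEigs h2.isHermitian,
    countP_roots_charpoly_mul_comm _ _ ht]

theorem sortedEigs_pos_of_lt_rank {n : ℕ} {M : Matrix (Fin n) (Fin n) ℝ} (hM : M.PosSemidef)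
    (i : Fin n) (hi : (i : ℕ) < M.rank) : 0 < sortedEigs M i := by
  rw [(sortedEigs_antitone hM.isHermitian).lt_apply_iff_lt_countP,
    ← roots_charpoly_eq_sortedEigs hM.isHermitian, hM.isHermitian.roots_charpoly_eq_eigenvalues,
    Multiset.countP_map, ← Finset.filter_val, Finset.card_val]
  rw [hM.isHermitian.rank_eq_card_non_zero_eigs, Fintype.card_subtype] at hi
  convert hi using 4 with j
  exact (hM.eigenvalues_nonneg j).lt_iff_ne'

open Polynomial in
theorem sortedEigs_cfc_of_antitone {k : ℕ} {M : Matrix (Fin k) (Fin k) ℝ} (hM : M.IsHermitian)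
    {φ : ℝ → ℝ} (hφ : Antitone φ) (hφ0 : ∀ x, 0 ≤ φ x) (hΘ : (hM.cfc φ).PosSemidef)
    (i : Fin k) : sortedEigs (hM.cfc φ) i = φ (sortedEigs M i.rev) := by
  have hanti : Antitone (fun i : Fin k => φ (sortedEigs M i.rev)) := fun a b hab =>
    hφ (sortedEigs_antitone hM (Fin.rev_le_rev.mpr hab))
  refine (sortedEigs_antitone hΘ.isHermitian).apply_eq_of_countP_eq hanti
    (sortedEigs_nonneg hΘ) (fun _ => hφ0 _) (fun t _ => ?_) rfl
  congr 1
  have hroots : (hM.cfc φ).charpoly.roots = Finset.univ.val.map (φ ∘ hM.eigenvalues) := by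
    rw [← hM.cfc_eq, hM.charpoly_cfc_eq, roots_prod _ _
      (Finset.prod_ne_zero_iff.mpr fun _ _ => X_sub_C_ne_zero _)]
    simp [Multiset.bind_singleton]
  have hsort := roots_charpoly_eq_sortedEigs hM
  rw [hM.roots_charpoly_eq_eigenvalues] at hsort
  rw [← roots_charpoly_eq_sortedEigs hΘ.isHermitian, hroots, ← Multiset.map_map]
  have hrev : (fun i : Fin k => φ (sortedEigs M i.rev)) = φ ∘ sortedEigs M ∘ Fin.revPerm := rfl
  rw [hrev, ← Multiset.map_map φ, ← Multiset.map_map (sortedEigs M),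
    Multiset.map_univ_val_equiv, ← hsort]
  rfl

theorem posDef_cfc {k : ℕ} {M : Matrix (Fin k) (Fin k) ℝ} (hM : M.IsHermitian)
    {φ : ℝ → ℝ} (hφ : ∀ i, 0 < φ (hM.eigenvalues i)) : (hM.cfc φ).PosDef := by
  rw [IsHermitian.cfc, Unitary.conjStarAlgAut_apply,
    (Unitary.isUnit_coe).posDef_star_right_conjugate_iff, posDef_diagonal_iff]
  exact hφ

theorem posSemidef_cfc {k : ℕ} {M : Matrix (Fin k) (Fin k) ℝ} (hM : M.IsHermitian)
    {φ : ℝ → ℝ} (hφ : ∀ i, 0 ≤ φ (hM.eigenvalues i)) : (hM.cfc φ).PosSemidef := by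
  rw [IsHermitian.cfc, Unitary.conjStarAlgAut_apply,
    (Unitary.isUnit_coe).posSemidef_star_right_conjugate_iff, posSemidef_diagonal_iff]
  exact hφ

theorem cfc_sub_cfc_mul_mul_cfc {k : ℕ} {M : Matrix (Fin k) (Fin k) ℝ} (hM : M.IsHermitian)
    (φ : ℝ → ℝ) :
    hM.cfc φ - hM.cfc φ * M * hM.cfc φ = hM.cfc (fun x => φ x - φ x * x * φ x) := by
  conv_lhs => enter [2, 1, 2]; rw [hM.spectral_theorem]
  simp only [IsHermitian.cfc, ← map_mul, ← map_sub, diagonal_mul_diagonal, diagonal_sub]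
  rfl

/-- If `Θ - Θ (FᵀF) Θ` is positive semidefinite then the diagonal of `F Θ Fᵀ` is at most `1`. -/
theorem mul_mul_transpose_apply_self_le_one {n k : ℕ} (F : Matrix (Fin n) (Fin k) ℝ)
    {Θ : Matrix (Fin k) (Fin k) ℝ} (hΘ : Θ.IsHermitian)
    (h : (Θ - Θ * (Fᵀ * F) * Θ).PosSemidef) (j : Fin n) : (F * Θ * Fᵀ) j j ≤ 1 := by
  set P := F * Θ * Fᵀ with hP
  have hPsymm : ∀ a b, P a b = P b a := by
    have hT : Pᵀ = P := by
      have : Θᵀ = Θ := by simpa [IsHermitian] using hΘ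
      simp [hP, this, Matrix.mul_assoc]
    intro a b
    exact congrFun (congrFun hT b) a
  have hd : 0 ≤ (P - P * P) j j := by
    have hPP : P - P * P = F * (Θ - Θ * (Fᵀ * F) * Θ) * Fᴴ := by
      simp only [hP, conjTranspose_eq_transpose_of_trivial, Matrix.mul_sub, Matrix.sub_mul,
        Matrix.mul_assoc]
    rw [hPP]
    exact (h.mul_mul_conjTranspose_same F).diag_nonneg
  have hsq : P j j * P j j ≤ (P * P) j j := by
    rw [Matrix.mul_apply]
    exact Finset.single_le_sum (f := fun l => P j l * P l j)
      (fun l _ => by rw [hPsymm l j]; exact mul_self_nonneg _) (Finset.mem_univ j)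
  rw [Matrix.sub_apply] at hd
  nlinarith

theorem sum_ite_lt_eq_of_le {n k s : ℕ} (hn : s ≤ n) (hk : s ≤ k) {f : Fin n → ℝ} {g : Fin k → ℝ}
    (h : ∀ (i : Fin n) (j : Fin k), (i : ℕ) = j → f i = g j) :
    (∑ i : Fin n, if (i : ℕ) < s then f i else 0) = ∑ j : Fin k, if (j : ℕ) < s then g j else 0 := by
  rw [← Finset.sum_filter, ← Finset.sum_filter]
  refine Finset.sum_bij' (fun i hi => ⟨i, (Finset.mem_filter.mp hi).2.trans_le hk⟩)
    (fun j hj => ⟨j, (Finset.mem_filter.mp hj).2.trans_le hn⟩) ?_ ?_ ?_ ?_ ?_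
  · intro i hi; simpa using hi
  · intro i hi; simpa using hi
  · intro i hi; rfl
  · intro i hi; rfl
  · intro i hi; exact h _ _ rfl

theorem stmt_3 {n m s k r : ℕ} (hn : 0 < n) (hm : 0 < m) (hs : 0 < s) (hsk : s ≤ k)
    (C : Matrix (Fin n) (Fin n) ℝ) (hC : C.PosSemidef)
    (hr : C.rank = r) (hsr : s ≤ r)
    (F : Matrix (Fin n) (Fin k) ℝ) (hCF : C = F * Fᵀ)
    (A : Matrix (Fin m) (Fin n) ℝ) (b : Fin m → ℝ) :
    ∃ (Θ : Matrix (Fin k) (Fin k) ℝ) (υ ν : Fin n → ℝ) (π : Fin m → ℝ) (τ : ℝ),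
      DFactFeasible A F Θ υ ν π τ ∧
      DFactObj s b Θ ν π τ =
        ∑ i : Fin n, if (i : ℕ) < s then Real.log (sortedEigs C i) else 0 := by
  have hsn : s ≤ n := hsr.trans (hr ▸ by simpa using C.rank_le_card_width)
  have hG : (Fᵀ * F).PosSemidef := by simpa using posSemidef_conjTranspose_mul_self F
  set δ : ℝ := sortedEigs (Fᵀ * F) ⟨s - 1, by omega⟩ with hδ_def
  have hδ : 0 < δ := by
    rw [hδ_def, ← sortedEigs_mul_transpose F (i := ⟨s - 1, by omega⟩) rfl, ← hCF]
    exact sortedEigs_pos_of_lt_rank hC _ (by simp only; omega)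
  let φ : ℝ → ℝ := fun x => (max x δ)⁻¹
  have hφ_pos : ∀ x, 0 < φ x := fun x => inv_pos.mpr (hδ.trans_le (le_max_right _ _))
  have hφ_anti : Antitone φ := fun x y hxy =>
    inv_anti₀ (hδ.trans_le (le_max_right _ _)) (max_le_max_right δ hxy)
  have hφ_mul : ∀ x, φ x * x ≤ 1 := fun x => by
    rw [inv_mul_le_one₀ (hδ.trans_le (le_max_right _ _))]
    exact le_max_left _ _
  have hΘ : (hG.isHermitian.cfc φ).PosDef := posDef_cfc _ fun _ => hφ_pos _
  have hdiag := mul_mul_transpose_apply_self_le_one F hΘ.isHermitian (by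
    rw [cfc_sub_cfc_mul_mul_cfc]
    refine posSemidef_cfc _ fun i => ?_
    nlinarith [hφ_pos (hG.isHermitian.eigenvalues i), hφ_mul (hG.isHermitian.eigenvalues i)])
  refine ⟨hG.isHermitian.cfc φ, fun j => 1 - (F * hG.isHermitian.cfc φ * Fᵀ) j j, 0, 0, 1,
    ⟨hΘ, fun j => sub_nonneg.mpr (hdiag j), fun _ => le_rfl, fun _ => le_rfl, fun j => by simp⟩, ?_⟩
  rw [sum_ite_lt_eq_of_le hsn hsk (g := fun j => Real.log (sortedEigs (Fᵀ * F) j))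
    (fun i j hij => by rw [hCF, sortedEigs_mul_transpose F hij])]
  simp only [DFactObj, Pi.zero_apply, Finset.sum_const_zero, zero_mul, add_zero, one_mul,
    add_sub_cancel_right]
  rw [← Equiv.sum_comp Fin.revPerm, ← Finset.sum_neg_distrib]
  refine Finset.sum_congr rfl fun i _ => ?_
  have hiff : k - s ≤ ((Fin.revPerm i : Fin k) : ℕ) ↔ (i : ℕ) < s := by
    rw [Fin.revPerm_apply, Fin.val_rev]
    omega
  by_cases hi : (i : ℕ) < s
  · rw [if_pos (hiff.mpr hi), if_pos hi, sortedEigs_cfc_of_antitone _ hφ_anti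
      (fun x => (hφ_pos x).le) hΘ.posSemidef, Fin.revPerm_apply, Fin.rev_rev]
    have hle : δ ≤ sortedEigs (Fᵀ * F) i :=
      sortedEigs_antitone hG.isHermitian (Fin.le_def.mpr (by simp only; omega))
    simp [φ, max_eq_left hle, Real.log_inv]
  · rw [if_neg (mt hiff.mp hi), if_neg hi, neg_zero]
end

section
/- Let F be an n×k real matrix, x̂ ∈ [0,1]ⁿ, and F(x̂) := Fᵀ·Diag(x̂)·F with spectral decomposition F(x̂) = Σ_{ℓ=1}^{k} λ̂_ℓ·û_ℓ·û_ℓᵀ, where λ̂_1 ≥ ⋯ ≥ λ̂_k ≥ 0 and û_1, …, û_k are orthonormal. Let 1 ≤ s ≤ rank(F(x̂)), and let ι̂ be the unique integer with 0 ≤ ι̂ < s such that (ι̂ = 0 or λ̂_{ι̂} > (1/(s−ι̂))·Σ_{ℓ=ι̂+1}^{k} λ̂_ℓ) and (1/(s−ι̂))·Σ_{ℓ=ι̂+1}^{k} λ̂_ℓ ≥ λ̂_{ι̂+1}. Assume the strict inequality (1/(s−ι̂))·Σ_{ℓ=ι̂+1}^{k} λ̂_ℓ > λ̂_{ι̂+1}.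 Then for each j ∈ {1,…,n}, the function t ↦ Γ_s(F(x̂ + t·e_j)) is differentiable at t = 0 with derivative Σ_{ℓ=1}^{ι̂} (F_{j·}·û_ℓ)²/λ̂_ℓ + ((s−ι̂)/Σ_{i=ι̂+1}^{k} λ̂_i)·Σ_{ℓ=ι̂+1}^{k} (F_{j·}·û_ℓ)². -/
open Matrix

/-- `tailSum lam i = Σ_{ℓ=i+1}^{k} λ_ℓ` (0-based: the sum of `lam ℓ` over indices `ℓ ≥ i`). -/
noncomputable def tailSum {k : ℕ} (lam : Fin k → ℝ) (i : ℕ) : ℝ :=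
  ∑ ℓ : Fin k, if i ≤ (ℓ : ℕ) then lam ℓ else 0

/-- The defining property of the index `ι` of Nikolov's Lemma 13 (with 1-based `λ_ι`
encoded as the 0-based entry `lam ⟨ι−1⟩`):
`ι < s`, `λ_ι > (1/(s−ι))·Σ_{ℓ=ι+1}^{k} λ_ℓ ≥ λ_{ι+1}` (convention `λ_0 = +∞`). -/
def iotaSpec (s : ℕ) {k : ℕ} (lam : Fin k → ℝ) (i : ℕ) : Prop :=
  i < s ∧
  (i = 0 ∨ ∀ h : i - 1 < k, ((s : ℝ) - i)⁻¹ * tailSum lam i < lam ⟨i - 1, h⟩) ∧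
  (∀ h : i < k, lam ⟨i, h⟩ ≤ ((s : ℝ) - i)⁻¹ * tailSum lam i)

/-- The index `ι` of Nikolov's Lemma 13 (chosen by choice; it is unique when it exists). -/
noncomputable def iotaOf (s : ℕ) {k : ℕ} (lam : Fin k → ℝ) : ℕ :=
  open Classical in
  if h : ∃ i, iotaSpec s lam i then h.choose else 0

/-- `Γ_s(X) = Σ_{ℓ=1}^{ι} log λ_ℓ(X) + (s−ι)·log((1/(s−ι))·Σ_{ℓ=ι+1}^{k} λ_ℓ(X))`,
where `ι = ι(X, s)` is the index from Nikolov's Lemma 13. -/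
noncomputable def Gamma (s : ℕ) {k : ℕ} (X : Matrix (Fin k) (Fin k) ℝ) : ℝ :=
  (∑ ℓ : Fin k, if (ℓ : ℕ) < iotaOf s (sortedEigs X) then Real.log (sortedEigs X ℓ) else 0) +
    ((s : ℝ) - iotaOf s (sortedEigs X)) *
      Real.log (((s : ℝ) - iotaOf s (sortedEigs X))⁻¹ *
        tailSum (sortedEigs X) (iotaOf s (sortedEigs X)))

open Filter Topology

section OrthonormalFamilies

variable {k : ℕ} {u w : Fin k → Fin k → ℝ}

theorem sum_dotProduct_mul_dotProduct
    (hu : ∀ i j, u i ⬝ᵥ u j = if i = j then (1 : ℝ) else 0) (a b : Fin k → ℝ) :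
    ∑ l, (a ⬝ᵥ u l) * (b ⬝ᵥ u l) = a ⬝ᵥ b := by
  have h1 : Matrix.of u * (Matrix.of u)ᵀ = 1 := by
    ext i j
    simpa [Matrix.mul_apply, dotProduct, Matrix.one_apply] using hu i j
  have h2 : (Matrix.of u)ᵀ * Matrix.of u = 1 := mul_eq_one_comm.mp h1
  calc ∑ l, (a ⬝ᵥ u l) * (b ⬝ᵥ u l)
      = (Matrix.of u *ᵥ a) ⬝ᵥ (Matrix.of u *ᵥ b) := by
        simp [dotProduct, Matrix.mulVec, mul_comm]
    _ = a ⬝ᵥ b := by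
        rw [dotProduct_mulVec, ← mulVec_transpose, mulVec_mulVec, h2, one_mulVec]

theorem sum_dotProduct_sq (hu : ∀ i j, u i ⬝ᵥ u j = if i = j then (1 : ℝ) else 0)
    (a : Fin k → ℝ) : ∑ l, (a ⬝ᵥ u l) ^ 2 = a ⬝ᵥ a := by
  simpa only [sq] using sum_dotProduct_mul_dotProduct hu a a

/-- The eigenvectors of `A` and of its rank-one perturbation `A + t • v vᵀ`. -/
theorem dotProduct_mul_sub_eq {A : Matrix (Fin k) (Fin k) ℝ} (hA : Aᵀ = A)
    {a b v : Fin k → ℝ} {t mu lam : ℝ} (hb : A *ᵥ b = lam • b)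
    (ha : (A + t • vecMulVec v v) *ᵥ a = mu • a) :
    (a ⬝ᵥ b) * (mu - lam) = t * (v ⬝ᵥ a) * (v ⬝ᵥ b) := by
  have h1 : b ⬝ᵥ (A *ᵥ a) = lam * (a ⬝ᵥ b) := by
    rw [dotProduct_mulVec, ← mulVec_transpose, hA, hb, smul_dotProduct, smul_eq_mul,
      dotProduct_comm]
  have h2 := congrArg (b ⬝ᵥ ·) ha
  simp only [add_mulVec, smul_mulVec, dotProduct_add, dotProduct_smul, h1,
    vecMulVec_mulVec, smul_eq_mul, op_smul_eq_smul] at h2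
  rw [dotProduct_comm b a, dotProduct_comm b v] at h2
  linarith

/-- One half of Weyl's perturbation inequality, for a doubly stochastic coupling. -/
theorem sq_sub_le_sum_of_le {P : Fin k → Fin k → ℝ} (hP : ∀ i j, 0 ≤ P i j)
    (hrow : ∀ i, ∑ j, P i j = 1) (hcol : ∀ j, ∑ i, P i j = 1) {mu lam : Fin k → ℝ}
    (hmu : Antitone mu) (hlam : Antitone lam) (m : Fin k) (hm : lam m ≤ mu m) :
    (mu m - lam m) ^ 2 ≤ ∑ i, ∑ j, P i j * (mu i - lam j) ^ 2 := by
  have hblock : 1 ≤ ∑ i ∈ Finset.Iic m, ∑ j ∈ Finset.Ici m, P i j := by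
    have h1 : ∀ i, ∑ j ∈ Finset.Ici m, P i j = 1 - ∑ j ∈ Finset.Iio m, P i j := by
      intro i
      rw [← hrow i, ← Finset.sum_compl_add_sum (Finset.Iio m)]
      have : (Finset.Iio m)ᶜ = Finset.Ici m := by ext; simp
      rw [this]; ring
    have h2 : ∑ i ∈ Finset.Iic m, ∑ j ∈ Finset.Iio m, P i j ≤ m := by
      rw [Finset.sum_comm]
      calc ∑ j ∈ Finset.Iio m, ∑ i ∈ Finset.Iic m, P i j ≤ ∑ j ∈ Finset.Iio m, 1 := by
            refine Finset.sum_le_sum fun j _ => ?_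
            rw [← hcol j]
            exact Finset.sum_le_univ_sum_of_nonneg fun i => hP i j
        _ = m := by simp
    simp only [h1, Finset.sum_sub_distrib]
    simp only [Finset.sum_const, Fin.card_Iic, nsmul_eq_mul, mul_one, Nat.cast_add, Nat.cast_one]
    linarith
  calc (mu m - lam m) ^ 2
      ≤ (∑ i ∈ Finset.Iic m, ∑ j ∈ Finset.Ici m, P i j) * (mu m - lam m) ^ 2 :=
        le_mul_of_one_le_left (sq_nonneg _) hblock
    _ ≤ ∑ i ∈ Finset.Iic m, ∑ j ∈ Finset.Ici m, P i j * (mu i - lam j) ^ 2 := by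
        simp only [Finset.sum_mul]
        refine Finset.sum_le_sum fun i hi => Finset.sum_le_sum fun j hj => ?_
        refine mul_le_mul_of_nonneg_left ?_ (hP i j)
        have := hmu (Finset.mem_Iic.mp hi)
        have := hlam (Finset.mem_Ici.mp hj)
        exact pow_le_pow_left₀ (by linarith) (by linarith) 2
    _ ≤ ∑ i ∈ Finset.Iic m, ∑ j, P i j * (mu i - lam j) ^ 2 :=
        Finset.sum_le_sum fun i _ => Finset.sum_le_univ_sum_of_nonneg
          fun j => mul_nonneg (hP i j) (sq_nonneg _)
    _ ≤ ∑ i, ∑ j, P i j * (mu i - lam j) ^ 2 :=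
        Finset.sum_le_univ_sum_of_nonneg fun i => Finset.sum_nonneg
          fun j _ => mul_nonneg (hP i j) (sq_nonneg _)

theorem sq_sub_le_sum {P : Fin k → Fin k → ℝ} (hP : ∀ i j, 0 ≤ P i j)
    (hrow : ∀ i, ∑ j, P i j = 1) (hcol : ∀ j, ∑ i, P i j = 1) {mu lam : Fin k → ℝ}
    (hmu : Antitone mu) (hlam : Antitone lam) (m : Fin k) :
    (mu m - lam m) ^ 2 ≤ ∑ i, ∑ j, P i j * (mu i - lam j) ^ 2 := by
  rcases le_total (lam m) (mu m) with h | h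
  · exact sq_sub_le_sum_of_le hP hrow hcol hmu hlam m h
  · have := sq_sub_le_sum_of_le (P := fun i j => P j i) (fun i j => hP j i) hcol hrow
      hlam hmu m h
    rw [Finset.sum_comm] at this
    rw [sub_sq_comm]
    simpa only [sub_sq_comm (mu _) (lam _)] using this

/-- Weyl's perturbation inequality for a rank-one perturbation. -/
theorem abs_sub_le_of_rank_one {A : Matrix (Fin k) (Fin k) ℝ} (hA : Aᵀ = A)
    {mu lam v : Fin k → ℝ} {t : ℝ}
    (hu : ∀ i j, u i ⬝ᵥ u j = if i = j then (1 : ℝ) else 0)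
    (hw : ∀ i j, w i ⬝ᵥ w j = if i = j then (1 : ℝ) else 0)
    (hAu : ∀ l, A *ᵥ u l = lam l • u l)
    (hBw : ∀ m, (A + t • vecMulVec v v) *ᵥ w m = mu m • w m)
    (hmu : Antitone mu) (hlam : Antitone lam) (m : Fin k) :
    |mu m - lam m| ≤ |t| * (v ⬝ᵥ v) := by
  have hv : 0 ≤ v ⬝ᵥ v := by
    rw [← sum_dotProduct_sq hu]; positivity
  have h := sq_sub_le_sum (P := fun i j => (w i ⬝ᵥ u j) ^ 2) (fun _ _ => sq_nonneg _)
    (fun i => by rw [sum_dotProduct_sq hu, hw, if_pos rfl])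
    (fun j => by
      simp only [dotProduct_comm _ (u j)]
      rw [sum_dotProduct_sq hw, hu, if_pos rfl]) hmu hlam m
  have h2 : ∑ i, ∑ j, (w i ⬝ᵥ u j) ^ 2 * (mu i - lam j) ^ 2 = (|t| * (v ⬝ᵥ v)) ^ 2 := by
    calc _ = ∑ i, ∑ j, t ^ 2 * ((v ⬝ᵥ w i) ^ 2 * (v ⬝ᵥ u j) ^ 2) := by
          refine Finset.sum_congr rfl fun i _ => Finset.sum_congr rfl fun j _ => ?_
          rw [← mul_pow, dotProduct_mul_sub_eq hA (hAu j) (hBw i)]; ring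
      _ = t ^ 2 * ((∑ i, (v ⬝ᵥ w i) ^ 2) * ∑ j, (v ⬝ᵥ u j) ^ 2) := by
          rw [Finset.sum_mul_sum]
          simp only [Finset.mul_sum]
      _ = _ := by
          rw [sum_dotProduct_sq hw, sum_dotProduct_sq hu, mul_pow, sq_abs]; ring
  rw [h2] at h
  exact abs_le_of_sq_le_sq h (by positivity)

end OrthonormalFamilies

section SortedEigs

variable {k : ℕ}

theorem antitone_sortedEigs (M : Matrix (Fin k) (Fin k) ℝ) : Antitone (sortedEigs M) := by
  unfold sortedEigs
  split_ifs with h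
  · intro i j hij
    exact Tuple.monotone_sort h.eigenvalues (Fin.rev_le_rev.mpr hij)
  · exact antitone_const

theorem exists_orthonormal_sortedEigs {M : Matrix (Fin k) (Fin k) ℝ} (hM : M.IsHermitian) :
    ∃ w : Fin k → Fin k → ℝ, (∀ i j, w i ⬝ᵥ w j = if i = j then (1 : ℝ) else 0) ∧
      ∀ m, M *ᵥ w m = sortedEigs M m • w m := by
  let σ : Equiv.Perm (Fin k) := Fin.revPerm.trans (Tuple.sort hM.eigenvalues)
  refine ⟨fun i => (hM.eigenvectorBasis (σ i)).ofLp, fun i j => ?_, fun m => ?_⟩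
  · have h := orthonormal_iff_ite.mp hM.eigenvectorBasis.orthonormal (σ j) (σ i)
    rw [EuclideanSpace.inner_eq_star_dotProduct, star_trivial] at h
    simpa [eq_comm] using h
  · rw [hM.mulVec_eigenvectorBasis, sortedEigs, dif_pos hM]
    rfl

/-- First-order perturbation of a spectral function. The functions `f m` applied to the different
eigenvalues may differ, provided they agree on coinciding eigenvalues. -/
theorem hasDerivAt_sum_sortedEigs {A : Matrix (Fin k) (Fin k) ℝ} (hA : Aᵀ = A)
    {lam : Fin k → ℝ} {u : Fin k → Fin k → ℝ} (hlam : Antitone lam)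
    (hu : ∀ i j, u i ⬝ᵥ u j = if i = j then (1 : ℝ) else 0)
    (hAu : ∀ l, A *ᵥ u l = lam l • u l) (v : Fin k → ℝ) {f : Fin k → ℝ → ℝ} {g : Fin k → ℝ}
    (hf : ∀ m, HasDerivAt (f m) (g m) (lam m)) (hfeq : ∀ m l, lam m = lam l → f m = f l) :
    (∀ m, Tendsto (fun t : ℝ => sortedEigs (A + t • vecMulVec v v) m) (𝓝 0) (𝓝 (lam m))) ∧
    HasDerivAt (fun t : ℝ => ∑ m, f m (sortedEigs (A + t • vecMulVec v v) m))
      (∑ m, g m * (v ⬝ᵥ u m) ^ 2) 0 := by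
  have hB : ∀ t : ℝ, (A + t • vecMulVec v v).IsHermitian := fun t => by
    rw [Matrix.IsHermitian, conjTranspose_eq_transpose_of_trivial]
    simp [hA, transpose_vecMulVec]
  choose w hw hBw using fun t => exists_orthonormal_sortedEigs (hB t)
  set mu : ℝ → Fin k → ℝ := fun t => sortedEigs (A + t • vecMulVec v v) with hmu
  have hweyl : ∀ t m, |mu t m - lam m| ≤ |t| * (v ⬝ᵥ v) := fun t m =>
    abs_sub_le_of_rank_one hA hu (hw t) hAu (hBw t) (antitone_sortedEigs _) hlam m
  have hlim : ∀ m, Tendsto (fun t => mu t m) (𝓝 0) (𝓝 (lam m)) := by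
    intro m
    rw [tendsto_iff_norm_sub_tendsto_zero]
    refine squeeze_zero (fun _ => norm_nonneg _) (fun t => hweyl t m) ?_
    have : Continuous fun t : ℝ => |t| * (v ⬝ᵥ v) := by fun_prop
    simpa using this.tendsto 0
  have hmu0 : ∀ m, mu 0 m = lam m := fun m => by
    have := hweyl 0 m
    simp only [abs_zero, zero_mul, abs_nonpos_iff] at this
    linarith
  refine ⟨hlim, ?_⟩
  set c : Fin k → Fin k → ℝ → ℝ := fun m l t => w t m ⬝ᵥ u l with hc
  have hkey : ∀ m l t, c m l t * (mu t m - lam l) = t * (v ⬝ᵥ w t m) * (v ⬝ᵥ u l) :=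
    fun m l t => dotProduct_mul_sub_eq hA (hAu l) (hBw t m)
  have hrow : ∀ m t, ∑ l, c m l t ^ 2 = 1 := fun m t => by
    rw [sum_dotProduct_sq hu, hw, if_pos rfl]
  have hcol : ∀ l t, ∑ m, c m l t ^ 2 = 1 := fun l t => by
    simp only [hc, dotProduct_comm _ (u l)]
    rw [sum_dotProduct_sq (hw t), hu, if_pos rfl]
  have hcO : ∀ m l, (c m l) =O[𝓝 0] (fun _ => (1 : ℝ)) := fun m l => by
    refine Asymptotics.IsBigO.of_bound 1 (Eventually.of_forall fun t => ?_)
    have : c m l t ^ 2 ≤ 1 := by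
      rw [← hrow m t]
      exact Finset.single_le_sum (f := fun l => c m l t ^ 2) (fun _ _ => sq_nonneg _)
        (Finset.mem_univ l)
    simpa using abs_le_one_iff_mul_self_le_one.mpr (by simpa [sq] using this)
  have hkeyO : ∀ m l, (fun t => c m l t * (mu t m - lam l)) =O[𝓝 0] (fun t : ℝ => t) := by
    intro m l
    simp only [hkey, mul_assoc]
    suffices h : (fun t => (v ⬝ᵥ w t m) * (v ⬝ᵥ u l)) =O[𝓝 0] (fun _ => (1 : ℝ)) by
      simpa using (Asymptotics.isBigO_refl (fun t : ℝ => t) (𝓝 0)).mul h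
    refine Asymptotics.IsBigO.of_bound (Real.sqrt (v ⬝ᵥ v) * |v ⬝ᵥ u l|)
      (Eventually.of_forall fun t => ?_)
    have : (v ⬝ᵥ w t m) ^ 2 ≤ v ⬝ᵥ v := by
      rw [← sum_dotProduct_sq (hw t) v]
      exact Finset.single_le_sum (f := fun m => (v ⬝ᵥ w t m) ^ 2) (fun _ _ => sq_nonneg _)
        (Finset.mem_univ m)
    simp only [norm_mul, Real.norm_eq_abs, norm_one, mul_one]
    gcongr
    exact Real.abs_le_sqrt this
  have hterm : ∀ m l, (fun t => c m l t * (c m l t *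
      (f m (mu t m) - f l (lam l) - g l * (mu t m - lam l)))) =o[𝓝 0] (fun t : ℝ => t) := by
    intro m l
    by_cases hml : lam m = lam l
    · have h1 : (fun t => f m (mu t m) - f l (lam l) - g l * (mu t m - lam l))
          =o[𝓝 0] (fun t => mu t m - lam l) := by
        have h := (hasDerivAt_iff_isLittleO.mp (hf l)).comp_tendsto (hml ▸ hlim m)
        simpa [Function.comp_def, hfeq m l hml, mul_comm] using h
      have h2 := (Asymptotics.isBigO_refl (c m l) (𝓝 0)).mul_isLittleO h1
      simpa using (hcO m l).mul_isLittleO (h2.trans_isBigO (hkeyO m l))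
    · have hsub : Tendsto (fun t => mu t m - lam l) (𝓝 0) (𝓝 (lam m - lam l)) :=
        (hlim m).sub_const _
      have hne : lam m - lam l ≠ 0 := sub_ne_zero.mpr hml
      have hct : (c m l) =O[𝓝 0] (fun t : ℝ => t) := by
        have h := (hkeyO m l).mul ((hsub.inv₀ hne).isBigO_one ℝ)
        simp only [mul_one] at h
        refine h.congr' ?_ EventuallyEq.rfl
        filter_upwards [hsub.eventually_ne hne] with t ht
        field_simp
      have hr : (fun t => f m (mu t m) - f l (lam l) - g l * (mu t m - lam l))
          =O[𝓝 0] (fun _ => (1 : ℝ)) :=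
        Tendsto.isBigO_one ℝ
          ((((hf m).continuousAt.tendsto.comp (hlim m)).sub_const _).sub (hsub.const_mul _))
      have hco : (c m l) =o[𝓝 0] (fun _ => (1 : ℝ)) :=
        hct.trans_isLittleO ((Asymptotics.isLittleO_one_iff ℝ).mpr tendsto_id)
      simpa using hco.mul_isBigO (hct.mul hr)
  rw [hasDerivAt_iff_isLittleO]
  have hsum := Asymptotics.IsLittleO.fun_sum (s := Finset.univ) fun m (_ : m ∈ Finset.univ) =>
    Asymptotics.IsLittleO.fun_sum (s := Finset.univ) fun l (_ : l ∈ Finset.univ) => hterm m l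
  refine hsum.congr (fun t => ?_) (fun t => (sub_zero t).symm)
  have e1 : ∑ m, ∑ l, c m l t ^ 2 * f m (mu t m) = ∑ m, f m (mu t m) := by
    simp only [← Finset.sum_mul, hrow, one_mul]
  have e2 : ∑ m, ∑ l, c m l t ^ 2 * f l (lam l) = ∑ l, f l (lam l) := by
    rw [Finset.sum_comm]
    simp only [← Finset.sum_mul, hcol, one_mul]
  have e3 : ∑ m, ∑ l, c m l t * (g l * (c m l t * (mu t m - lam l)))
      = t * ∑ l, g l * (v ⬝ᵥ u l) ^ 2 := by
    rw [Finset.sum_comm, Finset.mul_sum]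
    refine Finset.sum_congr rfl fun l _ => ?_
    simp only [hkey]
    calc _ = t * g l * (v ⬝ᵥ u l) * ∑ m, (v ⬝ᵥ w t m) * (u l ⬝ᵥ w t m) := by
          rw [Finset.mul_sum]
          refine Finset.sum_congr rfl fun m _ => ?_
          rw [hc, dotProduct_comm (u l)]; ring
      _ = _ := by rw [sum_dotProduct_mul_dotProduct (hw t)]; ring
  change _ = ∑ m, f m (mu t m) - ∑ m, f m (mu 0 m) - (t - 0) • ∑ m, g m * (v ⬝ᵥ u m) ^ 2
  simp only [hmu0, sub_zero, smul_eq_mul]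
  rw [← e1, ← e2, ← e3]
  simp only [← Finset.sum_sub_distrib]
  refine Finset.sum_congr rfl fun m _ => Finset.sum_congr rfl fun l _ => ?_
  ring

end SortedEigs

section Iota

variable {s k : ℕ} {lam : Fin k → ℝ}

theorem tailSum_eq_add {i i' : ℕ} (h : i ≤ i') :
    tailSum lam i = (∑ l : Fin k, if i ≤ (l : ℕ) ∧ (l : ℕ) < i' then lam l else 0)
      + tailSum lam i' := by
  unfold tailSum
  rw [← Finset.sum_add_distrib]
  refine Finset.sum_congr rfl fun l _ => ?_
  split_ifs <;> first | omega | simp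

theorem iotaSpec.not_lt (hsk : s ≤ k) (hlam : Antitone lam) {i i' : ℕ}
    (h : iotaSpec s lam i) (h' : iotaSpec s lam i') : ¬ i < i' := by
  intro hlt
  obtain ⟨his, -, hi⟩ := h
  obtain ⟨his', hi', -⟩ := h'
  have hi := hi (by omega)
  have hi' := (hi'.resolve_left (by omega)) (by omega)
  have hpos : (0 : ℝ) < (s : ℝ) - i := sub_pos.mpr (by exact_mod_cast his)
  have hpos' : (0 : ℝ) < (s : ℝ) - i' := sub_pos.mpr (by exact_mod_cast his')
  have hle : lam ⟨i' - 1, by omega⟩ ≤ lam ⟨i, by omega⟩ := hlam (Fin.mk_le_mk.mpr (by omega))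
  set τ := ((s : ℝ) - i)⁻¹ * tailSum lam i with hτ
  set τ' := ((s : ℝ) - i')⁻¹ * tailSum lam i' with hτ'
  have ht : tailSum lam i = ((s : ℝ) - i) * τ := by rw [hτ, mul_inv_cancel_left₀ hpos.ne']
  have ht' : tailSum lam i' = ((s : ℝ) - i') * τ' := by
    rw [hτ', mul_inv_cancel_left₀ hpos'.ne']
  have hmid : (∑ l : Fin k, if i ≤ (l : ℕ) ∧ (l : ℕ) < i' then lam l else 0)
      ≤ ((i' : ℝ) - i) * τ := by
    have hcard : (Finset.univ.filter fun l : Fin k => i ≤ (l : ℕ) ∧ (l : ℕ) < i').card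
        = i' - i := by
      rw [← Nat.card_Ico i i', ← Finset.card_map Fin.valEmbedding]
      congr 1
      ext a
      simp only [Finset.mem_map, Finset.mem_filter, Finset.mem_univ, true_and,
        Fin.valEmbedding_apply, Finset.mem_Ico]
      exact ⟨by rintro ⟨l, hl, rfl⟩; exact hl, fun ha => ⟨⟨a, by omega⟩, ha, rfl⟩⟩
    rw [← Finset.sum_filter]
    refine (Finset.sum_le_card_nsmul _ _ τ fun l hl => ?_).trans_eq ?_
    · exact (hlam (Fin.mk_le_mk.mpr (Finset.mem_filter.mp hl).2.1)).trans hi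
    · rw [hcard, nsmul_eq_mul, Nat.cast_sub hlt.le]
  have hadd := tailSum_eq_add (lam := lam) hlt.le
  rw [ht, ht'] at hadd
  have : ((s : ℝ) - i') * τ ≤ ((s : ℝ) - i') * τ' := by linarith
  have := le_of_mul_le_mul_left this hpos'
  linarith

theorem iotaSpec.iotaOf_eq (hsk : s ≤ k) (hlam : Antitone lam) {i : ℕ}
    (h : iotaSpec s lam i) : iotaOf s lam = i := by
  have hex : ∃ i, iotaSpec s lam i := ⟨i, h⟩
  have hch : iotaOf s lam = hex.choose := by unfold iotaOf; exact dif_pos hex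
  rw [hch]
  have h1 := iotaSpec.not_lt hsk hlam hex.choose_spec h
  have h2 := iotaSpec.not_lt hsk hlam h hex.choose_spec
  omega

end Iota

theorem stmt_16 {n k s : ℕ} (F : Matrix (Fin n) (Fin k) ℝ)
    (x : Fin n → ℝ) (hx : ∀ i, 0 ≤ x i ∧ x i ≤ 1)
    -- a spectral decomposition F(x̂) = Σ_ℓ λ̂_ℓ·û_ℓ·û_ℓᵀ with λ̂_1 ≥ ⋯ ≥ λ̂_k ≥ 0, û orthonormal
    (lam : Fin k → ℝ) (u : Fin k → Fin k → ℝ)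
    (hlam_mono : Antitone lam) (hlam_nonneg : ∀ ℓ, 0 ≤ lam ℓ)
    (horth : ∀ i j, dotProduct (u i) (u j) = if i = j then (1 : ℝ) else 0)
    (hdecomp : Fᵀ * Matrix.diagonal x * F = ∑ ℓ : Fin k, lam ℓ • Matrix.vecMulVec (u ℓ) (u ℓ))
    (hs : 1 ≤ s) (hrank : s ≤ (Fᵀ * Matrix.diagonal x * F).rank) (hsk : s ≤ k)
    -- ι̂ is the index of Nikolov's Lemma 13 for λ̂ …
    (ι : ℕ) (hι : ι < s)
    (hι1 : ι = 0 ∨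
      ((s : ℝ) - ι)⁻¹ * (∑ ℓ : Fin k, if ι ≤ (ℓ : ℕ) then lam ℓ else 0) < lam ⟨ι - 1, by omega⟩)
    -- … and the strict inequality (1/(s−ι̂))·Σ_{ℓ=ι̂+1}^{k} λ̂_ℓ > λ̂_{ι̂+1} holds
    (hι2 : lam ⟨ι, by omega⟩ < ((s : ℝ) - ι)⁻¹ * (∑ ℓ : Fin k, if ι ≤ (ℓ : ℕ) then lam ℓ else 0))
    (j : Fin n) :
    HasDerivAt
      (fun t : ℝ => Gamma s (Fᵀ * Matrix.diagonal (x + t • (Pi.single j 1 : Fin n → ℝ)) * F))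
      ((∑ ℓ : Fin k, if (ℓ : ℕ) < ι then dotProduct (F j) (u ℓ) ^ 2 / lam ℓ else 0) +
        ((s : ℝ) - ι) / (∑ ℓ : Fin k, if ι ≤ (ℓ : ℕ) then lam ℓ else 0) *
          (∑ ℓ : Fin k, if ι ≤ (ℓ : ℕ) then dotProduct (F j) (u ℓ) ^ 2 else 0)) 0 := by
  set A := Fᵀ * Matrix.diagonal x * F with hAdef
  set v : Fin k → ℝ := F j with hv
  have hpert : ∀ t : ℝ, Fᵀ * Matrix.diagonal (x + t • (Pi.single j 1 : Fin n → ℝ)) * F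
      = A + t • vecMulVec v v := by
    intro t
    ext a b
    simp only [hAdef, hv, Matrix.mul_apply (M := _ * _), Matrix.mul_diagonal, transpose_apply,
      Pi.add_apply, Pi.smul_apply, smul_eq_mul, Matrix.add_apply, Matrix.smul_apply,
      vecMulVec_apply, mul_add, add_mul, Finset.sum_add_distrib, Pi.single_apply, mul_ite, mul_one,
      mul_zero, ite_mul, zero_mul, Finset.sum_ite_eq', Finset.mem_univ, if_true]
    ring
  have hA : Aᵀ = A := by
    simp [hAdef, Matrix.mul_assoc]
  have hAu : ∀ l, A *ᵥ u l = lam l • u l := by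
    intro l
    rw [hdecomp, Matrix.sum_mulVec]
    simp only [smul_mulVec, vecMulVec_mulVec, horth, op_smul_eq_smul, ite_smul, one_smul, zero_smul,
      smul_ite, smul_zero, Finset.sum_ite_eq', Finset.mem_univ, if_true]
  have hpos : (0 : ℝ) < (s : ℝ) - ι := sub_pos.mpr (by exact_mod_cast hι)
  set T := ∑ ℓ : Fin k, if ι ≤ (ℓ : ℕ) then lam ℓ else 0 with hT
  have hτpos : 0 < ((s : ℝ) - ι)⁻¹ * T := (hlam_nonneg _).trans_lt hι2
  have hTpos : 0 < T := pos_of_mul_pos_right hτpos (inv_pos.mpr hpos).le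
  have htop : ∀ m : Fin k, (m : ℕ) < ι → ((s : ℝ) - ι)⁻¹ * T < lam m := fun m hm =>
    (hι1.resolve_left (by omega)).trans_le (hlam_mono (Fin.le_def.mpr (by simp; omega)))
  have hlow : ∀ m : Fin k, ι ≤ (m : ℕ) → lam m < ((s : ℝ) - ι)⁻¹ * T := fun m hm =>
    (hlam_mono (Fin.le_def.mpr hm)).trans_lt hι2
  have hsep : ∀ m l : Fin k, lam m = lam l → ((m : ℕ) < ι ↔ (l : ℕ) < ι) := by
    intro m l h
    by_contra hne
    rcases lt_or_ge (m : ℕ) ι with hm | hm <;> rcases lt_or_ge (l : ℕ) ι with hl | hl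
    · exact hne (by simp [hm, hl])
    · linarith [htop m hm, hlow l hl]
    · linarith [htop l hl, hlow m hm]
    · exact hne (by omega)
  obtain ⟨hlim, hlog⟩ := hasDerivAt_sum_sortedEigs hA hlam_mono horth hAu v
    (f := fun m => if (m : ℕ) < ι then Real.log else fun _ => 0)
    (g := fun m => if (m : ℕ) < ι then (lam m)⁻¹ else 0)
    (fun m => by
      split_ifs with hm
      · exact Real.hasDerivAt_log (hτpos.trans (htop m hm)).ne'
      · exact hasDerivAt_const _ _)
    (fun m l h => by simp only [hsep m l h])
  obtain ⟨-, htail⟩ := hasDerivAt_sum_sortedEigs hA hlam_mono horth hAu v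
    (f := fun m => if (m : ℕ) < ι then fun _ => 0 else id)
    (g := fun m => if (m : ℕ) < ι then 0 else 1)
    (fun m => by
      split_ifs with hm
      · exact hasDerivAt_const _ _
      · exact hasDerivAt_id _)
    (fun m l h => by simp only [hsep m l h])
  set mu : ℝ → Fin k → ℝ := fun t => sortedEigs (A + t • vecMulVec v v) with hmu
  have htail' : HasDerivAt (fun t => tailSum (mu t) ι)
      (∑ l : Fin k, if ι ≤ (l : ℕ) then (v ⬝ᵥ u l) ^ 2 else 0) 0 := by
    refine (htail.congr_deriv ?_).congr_of_eventuallyEq (Eventually.of_forall fun t => ?_)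
    · refine Finset.sum_congr rfl fun l _ => ?_
      by_cases h : (l : ℕ) < ι
      · simp [h, not_le.mpr h]
      · simp [h, not_lt.mp h]
    · refine Finset.sum_congr rfl fun l _ => ?_
      by_cases h : (l : ℕ) < ι
      · simp [h, not_le.mpr h]
      · simp [h, not_lt.mp h, hmu]
  have hlog' : HasDerivAt (fun t => ∑ l : Fin k, if (l : ℕ) < ι then Real.log (mu t l) else 0)
      (∑ l : Fin k, if (l : ℕ) < ι then (v ⬝ᵥ u l) ^ 2 / lam l else 0) 0 := by
    refine (hlog.congr_deriv ?_).congr_of_eventuallyEq (Eventually.of_forall fun t => ?_)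
    · refine Finset.sum_congr rfl fun l _ => ?_
      split_ifs <;> ring
    · refine Finset.sum_congr rfl fun l _ => ?_
      by_cases h : (l : ℕ) < ι <;> simp [h, hmu]
  have htail0 : Tendsto (fun t => tailSum (mu t) ι) (𝓝 0) (𝓝 T) := by
    refine tendsto_finsetSum _ fun l _ => ?_
    split_ifs
    · exact hlim l
    · exact tendsto_const_nhds
  have hT0 : tailSum (mu 0) ι = T :=
    tendsto_nhds_unique htail'.continuousAt.tendsto htail0
  have hτlim := htail0.const_mul ((s : ℝ) - ι)⁻¹
  have hiota : ∀ᶠ t in 𝓝 (0 : ℝ), iotaOf s (mu t) = ι := by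
    have h1 : ∀ᶠ t in 𝓝 (0 : ℝ), ι = 0 ∨
        ((s : ℝ) - ι)⁻¹ * tailSum (mu t) ι < mu t ⟨ι - 1, by omega⟩ := by
      rcases hι1 with h | h
      · exact Eventually.of_forall fun _ => Or.inl h
      · exact (hτlim.eventually_lt (hlim _) h).mono fun _ => Or.inr
    filter_upwards [h1, (hlim ⟨ι, by omega⟩).eventually_lt hτlim hι2] with t ht1 ht2
    exact iotaSpec.iotaOf_eq hsk (antitone_sortedEigs _)
      ⟨hι, ht1.imp_right fun h _ => h, fun _ => ht2.le⟩
  have hmain := hlog'.add (((htail'.const_mul ((s : ℝ) - ι)⁻¹).log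
    (by rw [hT0]; exact hτpos.ne')).const_mul ((s : ℝ) - ι))
  refine (hmain.congr_deriv ?_).congr_of_eventuallyEq ?_
  · rw [hT0]
    field_simp
  · filter_upwards [hiota] with t ht
    rw [hpert t]
    simp only [Gamma, Pi.add_apply]
    rw [show iotaOf s (sortedEigs (A + t • vecMulVec v v)) = ι from ht]
end
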